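/- Every permutation π avoiding the decreasing pattern ℓ⋯21 (ℓ ≥ 2) has substitution depth at most 2ℓ−3, where substitution depth is the height of the substitution decomposition tree of π. -/

import Mathlib

def Contains {k n : ℕ} (σ : Equiv.Perm (Fin k)) (π : Equiv.Perm (Fin n)) : Prop :=
  ∃ f : Fin k → Fin n, StrictMono f ∧ ∀ i j : Fin k, σ i < σ j ↔ π (f i) < π (f j)

abbrev PermOf := Σ n : ℕ, Equiv.Perm (Fin n)

def sumPerm {m n : ℕ} (σ : Equiv.Perm (Fin m)) (τ : Equiv.Perm (Fin n)) :
    Equiv.Perm (Fin (m + n)) :=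
  finSumFinEquiv.symm.trans ((Equiv.sumCongr σ τ).trans finSumFinEquiv)

/-- The skew sum of two permutations. -/
def skewPerm {m n : ℕ} (σ : Equiv.Perm (Fin m)) (τ : Equiv.Perm (Fin n)) :
    Equiv.Perm (Fin (m + n)) :=
  finSumFinEquiv.symm.trans ((Equiv.sumCongr σ τ).trans
    ((Equiv.sumComm (Fin m) (Fin n)).trans (finSumFinEquiv.trans (finCongr (Nat.add_comm n m)))))

def psum (σ τ : PermOf) : PermOf := ⟨σ.1 + τ.1, sumPerm σ.2 τ.2⟩

def pskew (σ τ : PermOf) : PermOf := ⟨σ.1 + τ.1, skewPerm σ.2 τ.2⟩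

/-- The empty permutation. -/
def pempty : PermOf := ⟨0, 1⟩

def psumList (L : List PermOf) : PermOf := L.foldr psum pempty

def pskewList (L : List PermOf) : PermOf := L.foldr pskew pempty

def SumDecomposable (π : PermOf) : Prop :=
  ∃ σ τ : PermOf, 0 < σ.1 ∧ 0 < τ.1 ∧ π = psum σ τ

def SumIndecomposable (π : PermOf) : Prop := 0 < π.1 ∧ ¬ SumDecomposable π

def SkewDecomposable (π : PermOf) : Prop :=
  ∃ σ τ : PermOf, 0 < σ.1 ∧ 0 < τ.1 ∧ π = pskew σ τ

def SkewIndecomposable (π : PermOf) : Prop := 0 < π.1 ∧ ¬ SkewDecomposable π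

def Contiguous {n : ℕ} (S : Finset (Fin n)) : Prop :=
  ∀ i j k : Fin n, i ∈ S → k ∈ S → i ≤ j → j ≤ k → j ∈ S

def IsPermInterval {n : ℕ} (π : Equiv.Perm (Fin n)) (S : Finset (Fin n)) : Prop :=
  Contiguous S ∧ Contiguous (S.image π)

def IsSimple {n : ℕ} (π : Equiv.Perm (Fin n)) : Prop :=
  ∀ S : Finset (Fin n), IsPermInterval π S → S.card = 0 ∨ S.card = 1 ∨ S.card = n

/-- A monotone (increasing or decreasing) permutation. -/
def IsMonotonePerm {n : ℕ} (σ : Equiv.Perm (Fin n)) : Prop :=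
  (∀ i j : Fin n, i ≤ j → σ i ≤ σ j) ∨ (∀ i j : Fin n, i ≤ j → σ j ≤ σ i)

def IsInflation {n m : ℕ} (π : Equiv.Perm (Fin n)) (σ : Equiv.Perm (Fin m))
    (k : Fin m → ℕ) (α : ∀ i, Equiv.Perm (Fin (k i))) : Prop :=
  ∃ e : (Σ i : Fin m, Fin (k i)) ≃ Fin n,
    (∀ p q : Σ i : Fin m, Fin (k i),
      e p < e q ↔ (p.1 < q.1 ∨ ∃ _ : p.1 = q.1, (p.2 : ℕ) < (q.2 : ℕ))) ∧
    (∀ p q : Σ i : Fin m, Fin (k i),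
      π (e p) < π (e q) ↔
        (σ p.1 < σ q.1 ∨ ∃ _ : p.1 = q.1, ((α p.1) p.2 : ℕ) < ((α q.1) q.2 : ℕ)))

/-- `SubstDepthLE π d` holds when the (canonical) substitution decomposition tree of `π`
has height at most `d`: a singleton is a leaf; otherwise `π` decomposes as an inflation of
a nonmonotone simple permutation, as a sum of sum indecomposable permutations, or as a
skew sum of skew indecomposable permutations, with all children of height at most `d-1`. -/
inductive SubstDepthLE : PermOf → ℕ → Prop where
  | leaf (π : PermOf) (d : ℕ) : π.1 = 1 → SubstDepthLE π d
  | inflation (π : PermOf) {m : ℕ} (σ : Equiv.Perm (Fin m)) (k : Fin m → ℕ)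
      (α : ∀ i, Equiv.Perm (Fin (k i))) (d : ℕ) :
      IsSimple σ → ¬ IsMonotonePerm σ → (∀ i, 0 < k i) →
      IsInflation π.2 σ k α → (∀ i, SubstDepthLE ⟨k i, α i⟩ d) → SubstDepthLE π (d + 1)
  | sum (L : List PermOf) (d : ℕ) : 2 ≤ L.length → (∀ τ ∈ L, SumIndecomposable τ) →
      (∀ τ ∈ L, SubstDepthLE τ d) → SubstDepthLE (psumList L) (d + 1)
  | skew (L : List PermOf) (d : ℕ) : 2 ≤ L.length → (∀ τ ∈ L, SkewIndecomposable τ) →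
      (∀ τ ∈ L, SubstDepthLE τ d) → SubstDepthLE (pskewList L) (d + 1)

/-!
The decreasing subsequences of a permutation are the cliques of its inversion graph. If a sum
indecomposable permutation has at least two entries, then each child of the root of its
decomposition tree has all its entries inverted with one entry of another child: for a skew sum any
entry of another child will do, and the simple permutation of an inflation has no isolated vertex in
its inversion graph, being itself sum indecomposable. So the clique number drops at every node which
is not a sum. The children of a sum are sum indecomposable, hence at least every other node on a
branch is not a sum, and the clique number drops at least once in any two consecutive levels. The
descent ends at a sum indecomposable permutation without inversions, which has a single entry.
-/

open scoped SimpleGraph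

/-- The inversion graph of a permutation: positions are adjacent when their values appear in the
opposite order, so that cliques are decreasing subsequences. -/
def inversionGraph {n : ℕ} (π : Equiv.Perm (Fin n)) : SimpleGraph (Fin n) where
  Adj i j := (i < j ∧ π j < π i) ∨ (j < i ∧ π i < π j)
  symm := ⟨fun _ _ => Or.symm⟩
  loopless := ⟨fun i h => by simp at h⟩

theorem inversionGraph_adj {n : ℕ} {π : Equiv.Perm (Fin n)} {i j : Fin n} :
    (inversionGraph π).Adj i j ↔ (i < j ∧ π j < π i) ∨ (j < i ∧ π i < π j) :=
  Iff.rfl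

theorem cliqueFree_inversionGraph_of_not_contains {n ℓ : ℕ} {π : Equiv.Perm (Fin n)}
    (h : ¬ Contains (Fin.revPerm : Equiv.Perm (Fin ℓ)) π) : (inversionGraph π).CliqueFree ℓ := by
  intro T hT
  let f := T.orderEmbOfFin hT.card_eq
  have hanti : StrictAnti (π ∘ f) := fun i j hij =>
    (hT.isClique (T.orderEmbOfFin_mem _ i) (T.orderEmbOfFin_mem _ j)
      (f.strictMono hij).ne).elim And.right fun h => absurd h.1 (f.strictMono hij).not_gt
  refine h ⟨f, f.strictMono, fun i j => ?_⟩
  rw [Fin.revPerm_apply, Fin.revPerm_apply, Fin.rev_lt_rev]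
  exact hanti.lt_iff_gt.symm

/-- An occurrence of the pattern `σ` in `π`, as an embedding of inversion graphs. -/
def inversionGraphEmbedding {k n : ℕ} {σ : Equiv.Perm (Fin k)} {π : Equiv.Perm (Fin n)}
    (f : Fin k → Fin n) (hf : StrictMono f) (h : ∀ i j, π (f i) < π (f j) ↔ σ i < σ j) :
    inversionGraph σ ↪g inversionGraph π where
  toFun := f
  inj' := hf.injective
  map_rel_iff' := by simp [inversionGraph_adj, hf.lt_iff_lt, h]

/-- `τ` occurs in `π` within the neighbourhood of one vertex of the inversion graph of `π`, so that
every decreasing subsequence of `τ` can be lengthened in `π`. -/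
def EmbedsInNeighborhood (τ π : PermOf) : Prop :=
  ∃ y, inversionGraph τ.2 ⊴ (inversionGraph π.2).induce ((inversionGraph π.2).neighborSet y)

theorem embedsInNeighborhood_of_forall_adj {τ π : PermOf}
    (f : inversionGraph τ.2 ↪g inversionGraph π.2) {y : Fin π.1}
    (hy : ∀ i, (inversionGraph π.2).Adj y (f i)) : EmbedsInNeighborhood τ π :=
  ⟨y, ⟨⟨fun i => ⟨f i, hy i⟩, fun _ _ h => f.injective (congrArg Subtype.val h)⟩, f.map_rel_iff⟩⟩

theorem EmbedsInNeighborhood.cliqueFree {τ π : PermOf} {ℓ : ℕ} (h : EmbedsInNeighborhood τ π)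
    (hπ : (inversionGraph π.2).CliqueFree (ℓ + 1)) : (inversionGraph τ.2).CliqueFree ℓ := by
  obtain ⟨y, hy⟩ := h
  have hfree := (hπ.cliqueFreeOn (s := Set.univ)).of_succ _ (Set.mem_univ y)
  rw [Set.univ_inter, ← SimpleGraph.cliqueFree_induce_iff] at hfree
  exact hfree.comap hy.isContained

/-! ### Sums and skew sums -/

theorem permOf_ext {π ρ : PermOf} (h : π.1 = ρ.1)
    (hval : ∀ i, (π.2 i : ℕ) = ρ.2 (Fin.cast h i)) : π = ρ := by
  obtain ⟨n, π⟩ := π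
  obtain ⟨m, ρ⟩ := ρ
  obtain rfl : n = m := h
  exact congrArg _ (Equiv.ext fun i => Fin.ext (hval i))

section SumPerm

variable {m n : ℕ} (σ : Equiv.Perm (Fin m)) (τ : Equiv.Perm (Fin n))

@[simp]
theorem sumPerm_castAdd (i : Fin m) : sumPerm σ τ (Fin.castAdd n i) = Fin.castAdd n (σ i) := by
  simp [sumPerm]

@[simp]
theorem sumPerm_natAdd (i : Fin n) : sumPerm σ τ (Fin.natAdd m i) = Fin.natAdd m (τ i) := by
  simp [sumPerm]

@[simp]
theorem val_skewPerm_castAdd (i : Fin m) :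
    (skewPerm σ τ (Fin.castAdd n i) : ℕ) = n + σ i := by
  simp [skewPerm, add_comm]

@[simp]
theorem val_skewPerm_natAdd (i : Fin n) : (skewPerm σ τ (Fin.natAdd m i) : ℕ) = τ i := by
  simp [skewPerm]

/-- The left summand of a sum, as an induced subgraph. -/
def sumPermInl : inversionGraph σ ↪g inversionGraph (sumPerm σ τ) :=
  inversionGraphEmbedding (Fin.castAdd n) (Fin.strictMono_castAdd n)
    (by simp [(Fin.strictMono_castAdd n).lt_iff_lt])

/-- The right summand of a sum, as an induced subgraph. -/
def sumPermInr : inversionGraph τ ↪g inversionGraph (sumPerm σ τ) :=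
  inversionGraphEmbedding (Fin.natAdd m) (Fin.strictMono_natAdd m) (by simp)

/-- The left summand of a skew sum, as an induced subgraph. -/
def skewPermInl : inversionGraph σ ↪g inversionGraph (skewPerm σ τ) :=
  inversionGraphEmbedding (Fin.castAdd n) (Fin.strictMono_castAdd n) (by simp [← Fin.val_fin_lt])

/-- The right summand of a skew sum, as an induced subgraph. -/
def skewPermInr : inversionGraph τ ↪g inversionGraph (skewPerm σ τ) :=
  inversionGraphEmbedding (Fin.natAdd m) (Fin.strictMono_natAdd m) (by simp [← Fin.val_fin_lt])

theorem skewPerm_adj_castAdd_natAdd (i : Fin m) (j : Fin n) :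
    (inversionGraph (skewPerm σ τ)).Adj (Fin.castAdd n i) (Fin.natAdd m j) := by
  refine Or.inl ⟨Fin.lt_def.mpr (i.2.trans_le (Nat.le_add_right m j)), ?_⟩
  rw [Fin.lt_def, val_skewPerm_castAdd, val_skewPerm_natAdd]
  omega

theorem sumPerm_assoc {k : ℕ} (ρ : Equiv.Perm (Fin k)) (i : Fin (m + n + k)) :
    (sumPerm (sumPerm σ τ) ρ i : ℕ) =
      sumPerm σ (sumPerm τ ρ) (Fin.cast (Nat.add_assoc m n k) i) := by
  induction i using Fin.addCases with
  | left i =>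
    induction i using Fin.addCases with
    | left i =>
      change _ = (sumPerm σ (sumPerm τ ρ) (Fin.castAdd (n + k) i) : ℕ)
      simp
    | right i =>
      change _ = (sumPerm σ (sumPerm τ ρ) (Fin.natAdd m (Fin.castAdd k i)) : ℕ)
      simp
  | right i =>
    rw [← Fin.natAdd_natAdd]
    simp [Nat.add_assoc]

theorem sumPerm_trans_revPerm : (sumPerm σ τ).trans Fin.revPerm =
    skewPerm (σ.trans Fin.revPerm) (τ.trans Fin.revPerm) := by
  ext i
  induction i using Fin.addCases with
  | left i =>
    simp only [Equiv.trans_apply, sumPerm_castAdd, val_skewPerm_castAdd, Fin.revPerm_apply,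
      Fin.val_rev, Fin.val_castAdd]
    omega
  | right i =>
    simp only [Equiv.trans_apply, sumPerm_natAdd, val_skewPerm_natAdd, Fin.revPerm_apply,
      Fin.val_rev, Fin.val_natAdd]
    omega

end SumPerm

theorem psum_assoc (π σ τ : PermOf) : psum (psum π σ) τ = psum π (psum σ τ) :=
  permOf_ext (Nat.add_assoc _ _ _) (sumPerm_assoc π.2 σ.2 τ.2)

theorem psum_pempty (π : PermOf) : psum π pempty = π :=
  permOf_ext rfl fun i => congrArg Fin.val (sumPerm_castAdd π.2 1 i)

/-- The complement of a permutation, reversing its values; it exchanges sums and skew sums. -/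
def complement (π : PermOf) : PermOf := ⟨π.1, π.2.trans Fin.revPerm⟩

theorem complement_complement (π : PermOf) : complement (complement π) = π :=
  permOf_ext rfl fun i => congrArg Fin.val (Fin.rev_rev (π.2 i))

theorem complement_psum (σ τ : PermOf) :
    complement (psum σ τ) = pskew (complement σ) (complement τ) :=
  congrArg (Sigma.mk (σ.1 + τ.1)) (sumPerm_trans_revPerm σ.2 τ.2)

theorem complement_psumList (L : List PermOf) :
    complement (psumList L) = pskewList (L.map complement) := by
  induction L with
  | nil => exact permOf_ext rfl fun i => i.elim0
  | cons τ L ih => exact (complement_psum τ _).trans (congrArg _ ih)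

theorem skewDecomposable_complement {π : PermOf} :
    SkewDecomposable (complement π) ↔ SumDecomposable π := by
  constructor
  · rintro ⟨σ, τ, hσ, hτ, h⟩
    refine ⟨complement σ, complement τ, hσ, hτ, ?_⟩
    rw [← complement_complement (psum _ _), complement_psum, complement_complement,
      complement_complement, ← h, complement_complement]
  · rintro ⟨σ, τ, hσ, hτ, rfl⟩
    exact ⟨complement σ, complement τ, hσ, hτ, complement_psum σ τ⟩

theorem sumDecomposable_complement {π : PermOf} :
    SumDecomposable (complement π) ↔ SkewDecomposable π := by
  rw [← skewDecomposable_complement, complement_complement]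

theorem SumDecomposable.exists_sumIndecomposable_psum {π : PermOf} (h : SumDecomposable π) :
    ∃ σ τ, SumIndecomposable σ ∧ 0 < τ.1 ∧ π = psum σ τ := by
  obtain ⟨σ, τ, hσ, hτ, rfl⟩ := h
  induction hn : σ.1 using Nat.strong_induction_on generalizing σ τ with
  | _ n ih =>
    subst hn
    by_cases hdec : SumDecomposable σ
    · obtain ⟨σ₁, σ₂, h₁, h₂, rfl⟩ := hdec
      rw [psum_assoc]
      exact ih σ₁.1 (Nat.lt_add_of_pos_right h₂) σ₁ _ h₁ (Nat.add_pos_left h₂ _) rfl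
    · exact ⟨σ, τ, ⟨hσ, hdec⟩, hτ, rfl⟩

theorem SumDecomposable.exists_psumList {π : PermOf} (h : SumDecomposable π) :
    ∃ L : List PermOf, 2 ≤ L.length ∧ (∀ τ ∈ L, SumIndecomposable τ) ∧ psumList L = π := by
  induction hn : π.1 using Nat.strong_induction_on generalizing π with
  | _ n ih =>
    obtain ⟨σ, τ, hσ, hτ, rfl⟩ := h.exists_sumIndecomposable_psum
    by_cases hdec : SumDecomposable τ
    · obtain ⟨L, hL, hLi, rfl⟩ := ih τ.1 (hn ▸ Nat.lt_add_of_pos_left hσ.1) hdec rfl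
      exact ⟨σ :: L, hL.trans (Nat.le_succ _), List.forall_mem_cons.mpr ⟨hσ, hLi⟩, rfl⟩
    · refine ⟨[σ, τ], le_rfl, ?_, congrArg (psum σ) (psum_pempty τ)⟩
      simpa using ⟨hσ, hτ, hdec⟩

theorem SkewDecomposable.exists_pskewList {π : PermOf} (h : SkewDecomposable π) :
    ∃ L : List PermOf, 2 ≤ L.length ∧ (∀ τ ∈ L, SkewIndecomposable τ) ∧ pskewList L = π := by
  obtain ⟨L, hL, hLi, hLπ⟩ := (sumDecomposable_complement.mpr h).exists_psumList
  refine ⟨L.map complement, hL.trans_eq (List.length_map _).symm, ?_, ?_⟩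
  · exact List.forall_mem_map.mpr fun τ hτ =>
      ⟨(hLi τ hτ).1, mt skewDecomposable_complement.mp (hLi τ hτ).2⟩
  · rw [← complement_psumList, hLπ, complement_complement]

theorem isIndContained_psumList {L : List PermOf} {τ : PermOf} (hτ : τ ∈ L) :
    inversionGraph τ.2 ⊴ inversionGraph (psumList L).2 := by
  induction L with
  | nil => exact absurd hτ List.not_mem_nil
  | cons σ L ih =>
    rcases List.mem_cons.mp hτ with rfl | hτ
    · exact ⟨sumPermInl _ _⟩
    · exact (ih hτ).trans ⟨sumPermInr _ _⟩

theorem isIndContained_pskewList {L : List PermOf} {τ : PermOf} (hτ : τ ∈ L) :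
    inversionGraph τ.2 ⊴ inversionGraph (pskewList L).2 := by
  induction L with
  | nil => exact absurd hτ List.not_mem_nil
  | cons σ L ih =>
    rcases List.mem_cons.mp hτ with rfl | hτ
    · exact ⟨skewPermInl _ _⟩
    · exact (ih hτ).trans ⟨skewPermInr _ _⟩

theorem embedsInNeighborhood_pskew_left (σ : PermOf) {τ : PermOf} (hτ : 0 < τ.1) :
    EmbedsInNeighborhood σ (pskew σ τ) :=
  embedsInNeighborhood_of_forall_adj (skewPermInl σ.2 τ.2) fun i =>
    (skewPerm_adj_castAdd_natAdd σ.2 τ.2 i ⟨0, hτ⟩).symm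

theorem embedsInNeighborhood_pskew_right {σ : PermOf} (hσ : 0 < σ.1) (τ : PermOf) :
    EmbedsInNeighborhood τ (pskew σ τ) :=
  embedsInNeighborhood_of_forall_adj (skewPermInr σ.2 τ.2) fun j =>
    skewPerm_adj_castAdd_natAdd σ.2 τ.2 ⟨0, hσ⟩ j

theorem embedsInNeighborhood_pskewList {L : List PermOf} (hL : 2 ≤ L.length)
    (hpos : ∀ τ ∈ L, 0 < τ.1) {τ : PermOf} (hτ : τ ∈ L) :
    EmbedsInNeighborhood τ (pskewList L) := by
  obtain _ | ⟨σ₁, _ | ⟨σ₂, L⟩⟩ := L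
  · exact absurd hτ List.not_mem_nil
  · exact absurd hL (by simp)
  obtain ⟨h₁, h₂, -⟩ : 0 < σ₁.1 ∧ 0 < σ₂.1 ∧ ∀ τ ∈ L, 0 < τ.1 := by simpa using hpos
  rcases List.mem_cons.mp hτ with rfl | hτ
  · exact embedsInNeighborhood_pskew_left τ (Nat.add_pos_left h₂ _)
  · obtain ⟨y, hy⟩ := embedsInNeighborhood_pskew_right h₁ (pskewList (σ₂ :: L))
    exact ⟨y, (isIndContained_pskewList hτ).trans hy⟩

theorem exists_perm_lt_iff_lt {α : Type*} [LinearOrder α] {k : ℕ} {g : Fin k → α}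
    (hg : Function.Injective g) : ∃ τ : Equiv.Perm (Fin k), ∀ i j, τ i < τ j ↔ g i < g j := by
  have hmono : StrictMono (g ∘ Tuple.sort g) :=
    (Tuple.monotone_sort g).strictMono_of_injective (hg.comp (Tuple.sort g).injective)
  exact ⟨(Tuple.sort g).symm, fun i j => by
    simpa using (hmono.lt_iff_lt (a := (Tuple.sort g).symm i) (b := (Tuple.sort g).symm j)).symm⟩

theorem equiv_eq_of_lt_imp_lt {α β : Type*} [LinearOrder α] [WellFoundedLT α] {e f : β ≃ α}
    (h : ∀ i j, e i < e j → f i < f j) : e = f := by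
  have hmono : StrictMono (e.symm.trans f) := fun x y hxy => h _ _ (by simpa using hxy)
  have hid : hmono.orderIsoOfSurjective _ (e.symm.trans f).surjective = OrderIso.refl α :=
    Subsingleton.elim _ _
  ext i
  simpa using (DFunLike.congr_fun hid (e i)).symm

theorem sumDecomposable_of_forall_castAdd_lt_natAdd {m n : ℕ} {π : Equiv.Perm (Fin (m + n))}
    (hm : 0 < m) (hn : 0 < n) (h : ∀ i j, π (Fin.castAdd n i) < π (Fin.natAdd m j)) :
    SumDecomposable ⟨m + n, π⟩ := by
  obtain ⟨σ, hσ⟩ := exists_perm_lt_iff_lt (π.injective.comp (Fin.castAdd_injective m n))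
  obtain ⟨τ, hτ⟩ := exists_perm_lt_iff_lt (π.injective.comp (Fin.natAdd_injective n m))
  refine ⟨⟨m, σ⟩, ⟨n, τ⟩, hm, hn, congrArg (Sigma.mk (m + n)) (Eq.symm ?_)⟩
  refine equiv_eq_of_lt_imp_lt fun i j hij => ?_
  induction i using Fin.addCases with
  | left i =>
    induction j using Fin.addCases with
    | left j => exact (hσ i j).mp (by simpa [(Fin.strictMono_castAdd n).lt_iff_lt] using hij)
    | right j => exact h i j
  | right i =>
    induction j using Fin.addCases with
    | left j =>
      rw [sumPerm_natAdd, sumPerm_castAdd, Fin.lt_def, Fin.val_natAdd, Fin.val_castAdd] at hij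
      omega
    | right j => exact (hτ i j).mp (by simpa using hij)

theorem sumDecomposable_iff_exists_set {π : PermOf} :
    SumDecomposable π ↔ ∃ s : Set (Fin π.1), s.Nonempty ∧ sᶜ.Nonempty ∧
      ∀ i ∈ s, ∀ j ∈ sᶜ, i < j ∧ π.2 i < π.2 j := by
  constructor
  · rintro ⟨⟨m, σ⟩, ⟨n, τ⟩, hm : 0 < m, hn : 0 < n, rfl⟩
    have hlt (i : Fin m) (j : Fin n) : Fin.castAdd n i < Fin.natAdd m j :=
      Fin.lt_def.mpr (i.2.trans_le (Nat.le_add_right m j))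
    refine ⟨Set.range (Fin.castAdd n), ⟨_, ⟨0, hm⟩, rfl⟩, ⟨Fin.natAdd m ⟨0, hn⟩, ?_⟩, ?_⟩
    · rintro ⟨i, hi⟩
      exact (hlt i _).ne hi
    · rintro _ ⟨i, rfl⟩ (j : Fin (m + n)) hj
      induction j using Fin.addCases with
      | left j => exact absurd ⟨j, rfl⟩ hj
      | right j =>
        refine ⟨hlt i j, ?_⟩
        change sumPerm σ τ _ < sumPerm σ τ _
        simpa using hlt (σ i) (τ j)
  · obtain ⟨n, π⟩ := π
    rintro ⟨s, ⟨x, hx⟩, hs, h⟩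
    obtain ⟨p, hp, hmin⟩ := sᶜ.toFinite.exists_minimal hs
    have mem_of_lt (i : Fin n) (hi : i < p) : i ∈ s := by
      by_contra his
      exact hi.not_ge (hmin his hi.le)
    have notMem_of_le (j : Fin n) (hj : p ≤ j) : j ∈ sᶜ := fun hjs => hj.not_gt (h j hjs p hp).1
    obtain ⟨m, hm⟩ := p
    obtain ⟨k, rfl⟩ := Nat.exists_eq_add_of_lt hm
    exact sumDecomposable_of_forall_castAdd_lt_natAdd (m := m) (n := k + 1)
      ((Nat.zero_le _).trans_lt (h x hx _ hp).1) k.succ_pos fun i j =>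
        (h _ (mem_of_lt _ i.2) _ (notMem_of_le _ (Nat.le_add_right m j))).2

theorem sumDecomposable_of_forall_not_adj {π : PermOf} (hπ : 1 < π.1) {i : Fin π.1}
    (hi : ∀ j, ¬ (inversionGraph π.2).Adj i j) : SumDecomposable π := by
  have lt_of_lt {j k : Fin π.1} (hjk : j < k) (h : j = i ∨ k = i) : π.2 j < π.2 k := by
    refine lt_of_le_of_ne (not_lt.mp fun hlt => ?_) (π.2.injective.ne hjk.ne)
    rcases h with rfl | rfl
    · exact hi k (Or.inl ⟨hjk, hlt⟩)
    · exact hi j (Or.inr ⟨hjk, hlt⟩)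
  have lt_across {j k : Fin π.1} (hj : j < i) (hk : i ≤ k) : π.2 j < π.2 k := by
    rcases hk.eq_or_lt with rfl | hk
    · exact lt_of_lt hj (Or.inr rfl)
    · exact (lt_of_lt hj (Or.inr rfl)).trans (lt_of_lt hk (Or.inl rfl))
  rw [sumDecomposable_iff_exists_set]
  by_cases hmin : ∃ j, j < i
  · exact ⟨Set.Iio i, hmin, ⟨i, lt_irrefl i⟩, fun j hj k hk =>
      ⟨hj.trans_le (not_lt.mp hk), lt_across hj (not_lt.mp hk)⟩⟩
  · push Not at hmin
    have : Nontrivial (Fin π.1) := Fin.nontrivial_iff_two_le.mpr hπ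
    refine ⟨{i}, Set.singleton_nonempty i, exists_ne i, ?_⟩
    rintro _ rfl k hk
    have hik := lt_of_le_of_ne (hmin k) (Ne.symm hk)
    exact ⟨hik, lt_of_lt hik (Or.inl rfl)⟩

theorem sumDecomposable_of_monotone {π : PermOf} (hπ : 1 < π.1) (hmono : Monotone π.2) :
    SumDecomposable π := by
  refine sumDecomposable_of_forall_not_adj hπ (i := ⟨0, Nat.zero_lt_of_lt hπ⟩) fun j => ?_
  rintro (⟨hlt, hval⟩ | ⟨hlt, hval⟩)
  · exact hval.not_ge (hmono hlt.le)
  · exact hval.not_ge (hmono hlt.le)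

theorem not_isMonotonePerm {π : PermOf} (hπ : 1 < π.1) (hsum : ¬ SumDecomposable π)
    (hskew : ¬ SkewDecomposable π) : ¬ IsMonotonePerm π.2 := by
  rintro (hmono | hanti)
  · exact hsum (sumDecomposable_of_monotone hπ hmono)
  · exact hskew (sumDecomposable_complement.mp
      (sumDecomposable_of_monotone hπ fun i j hij => Fin.rev_le_rev.mpr (hanti i j hij)))

/-! ### Quotients and inflations -/

/-- `σ` is the pattern formed by the blocks of a partition of `π` into intervals. The partition is
recorded by the map sending a position to the index of its block: this map is a monotone surjection
for the order on positions and for the order on values. -/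
def IsQuotient (π σ : PermOf) : Prop :=
  ∃ c : Fin π.1 → Fin σ.1, Function.Surjective c ∧ Monotone c ∧
    ∀ x y, π.2 x ≤ π.2 y → σ.2 (c x) ≤ σ.2 (c y)

theorem IsQuotient.refl (π : PermOf) : IsQuotient π π :=
  ⟨id, Function.surjective_id, monotone_id, fun _ _ h => h⟩

theorem IsQuotient.trans {π σ τ : PermOf} (hπσ : IsQuotient π σ) (hστ : IsQuotient σ τ) :
    IsQuotient π τ := by
  obtain ⟨c, hc, hpos, hval⟩ := hπσ
  obtain ⟨c', hc', hpos', hval'⟩ := hστ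
  exact ⟨c' ∘ c, hc'.comp hc, hpos'.comp hpos, fun x y h => hval' _ _ (hval x y h)⟩

theorem IsQuotient.complement {π σ : PermOf} (h : IsQuotient π σ) :
    IsQuotient (complement π) (complement σ) := by
  obtain ⟨c, hc, hpos, hval⟩ := h
  exact ⟨c, hc, hpos, fun x y hxy => Fin.rev_le_rev.mpr (hval y x (Fin.rev_le_rev.mp hxy))⟩

theorem IsQuotient.sumDecomposable {π σ : PermOf} (h : IsQuotient π σ)
    (hσ : SumDecomposable σ) : SumDecomposable π := by
  obtain ⟨c, hc, hpos, hval⟩ := h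
  rw [sumDecomposable_iff_exists_set] at hσ ⊢
  obtain ⟨s, hs, hs', hlt⟩ := hσ
  refine ⟨c ⁻¹' s, hs.preimage hc, hs'.preimage hc, fun i hi j hj => ⟨?_, ?_⟩⟩
  · exact hpos.reflect_lt (hlt _ hi _ hj).1
  · exact lt_of_not_ge fun hle => (hlt _ hi _ hj).2.not_ge (hval j i hle)

theorem IsQuotient.skewDecomposable {π σ : PermOf} (h : IsQuotient π σ)
    (hσ : SkewDecomposable σ) : SkewDecomposable π :=
  sumDecomposable_complement.mp (h.complement.sumDecomposable (sumDecomposable_complement.mpr hσ))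

theorem exists_isQuotient_of_monotone {π : PermOf} {f : Fin π.1 → Fin π.1} (hpos : Monotone f)
    (hval : ∀ x y, π.2 x ≤ π.2 y → π.2 (f x) ≤ π.2 (f y)) :
    ∃ σ : PermOf, σ.1 = (Finset.univ.image f).card ∧ IsQuotient π σ := by
  let r := (Finset.univ.image f).orderIsoOfFin rfl
  let c : Fin π.1 → Fin (Finset.univ.image f).card := fun x =>
    r.symm ⟨f x, Finset.mem_image_of_mem f (Finset.mem_univ x)⟩
  have hrc (x : Fin π.1) : (r (c x) : Fin π.1) = f x := by simp [c]
  obtain ⟨σ, hσ⟩ := exists_perm_lt_iff_lt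
    (π.2.injective.comp (Subtype.val_injective.comp r.injective))
  refine ⟨⟨_, σ⟩, rfl, c, fun i => ?_, fun x y hxy => ?_, fun x y hxy => ?_⟩
  · obtain ⟨x, -, hx⟩ := Finset.mem_image.mp (r i).2
    exact ⟨x, r.injective (Subtype.ext ((hrc x).trans hx))⟩
  · exact r.symm.monotone (hpos hxy)
  · refine not_lt.mp fun hlt => (hval x y hxy).not_gt ?_
    simpa [hrc] using (hσ (c y) (c x)).mp hlt

theorem Contiguous.monotone_ite {n : ℕ} {S : Finset (Fin n)} (hS : Contiguous S) {a : Fin n}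
    (ha : a ∈ S) : Monotone fun x => if x ∈ S then a else x := by
  intro x y hxy
  by_cases hx : x ∈ S <;> by_cases hy : y ∈ S <;> simp only [hx, hy, if_true, if_false]
  · exact le_rfl
  · exact not_lt.mp fun hlt => hy (hS x y a hx ha hxy hlt.le)
  · exact not_lt.mp fun hlt => hx (hS a x y ha hy hlt.le hxy)
  · exact hxy

theorem exists_isQuotient_of_not_isSimple {π : PermOf} (h : ¬ IsSimple π.2) :
    ∃ σ : PermOf, 1 < σ.1 ∧ σ.1 < π.1 ∧ IsQuotient π σ := by
  unfold IsSimple at h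
  push Not at h
  obtain ⟨S, ⟨hpos, hval⟩, hcard0, hcard1, hcardn⟩ := h
  obtain ⟨a, ha, b, hb, hab⟩ := Finset.one_lt_card.mp (show 1 < S.card by omega)
  obtain ⟨x, hx⟩ : ∃ x, x ∉ S := by
    by_contra! hall
    exact hcardn (by simp [Finset.eq_univ_of_forall hall])
  -- Collapsing the interval `S` to its point `a` is monotone for both orders and misses `b`.
  let f : Fin π.1 → Fin π.1 := fun x => if x ∈ S then a else x
  have hfval (y : Fin π.1) :
      π.2 (f y) = if π.2 y ∈ S.image π.2 then π.2 a else π.2 y := by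
    simp [f, apply_ite π.2]
  obtain ⟨σ, hσ, hπσ⟩ := exists_isQuotient_of_monotone (hpos.monotone_ite ha) (π := π) (f := f)
    fun y z hyz => by
      rw [hfval, hfval]
      exact hval.monotone_ite (Finset.mem_image_of_mem π.2 ha) hyz
  refine ⟨σ, hσ ▸ ?_, hσ ▸ ?_, hπσ⟩
  · refine Finset.one_lt_card.mpr ⟨f a, Finset.mem_image_of_mem f (Finset.mem_univ a),
      f x, Finset.mem_image_of_mem f (Finset.mem_univ x), ?_⟩
    simpa [f, ha, hx] using fun hax : a = x => hx (hax ▸ ha)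
  · have hle : (Finset.univ.image f).card ≤ (Finset.univ.erase b).card := by
      refine Finset.card_le_card (Finset.image_subset_iff.mpr fun y _ => ?_)
      refine Finset.mem_erase.mpr ⟨fun hy => ?_, Finset.mem_univ _⟩
      by_cases hyS : y ∈ S
      · exact hab (by simpa [f, hyS] using hy)
      · have hyb : y = b := by simpa [f, hyS] using hy
        exact hyS (hyb ▸ hb)
    exact hle.trans_lt (by simpa using Finset.card_erase_lt_of_mem (Finset.mem_univ b))

theorem exists_isSimple_isQuotient {π : PermOf} (hπ : 1 < π.1) :
    ∃ σ : PermOf, 1 < σ.1 ∧ IsSimple σ.2 ∧ IsQuotient π σ := by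
  induction hn : π.1 using Nat.strong_induction_on generalizing π with
  | _ n ih =>
    by_cases hs : IsSimple π.2
    · exact ⟨π, hπ, hs, .refl π⟩
    · obtain ⟨ρ, hρ, hlt, hπρ⟩ := exists_isQuotient_of_not_isSimple hs
      obtain ⟨σ, hσ, hsimple, hρσ⟩ := ih ρ.1 (hn ▸ hlt) hρ rfl
      exact ⟨σ, hσ, hsimple, hπρ.trans hρσ⟩

theorem lt_iff_map_lt_or_map_eq_and_lt {α β : Type*} [LinearOrder α] [LinearOrder β] {f : α → β}
    (hf : Monotone f) {x y : α} : x < y ↔ f x < f y ∨ f x = f y ∧ x < y := by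
  refine ⟨fun h => ?_, fun h => h.elim hf.reflect_lt And.right⟩
  exact (hf h.le).lt_or_eq.imp_right fun heq => ⟨heq, h⟩

theorem IsQuotient.exists_isInflation {π σ : PermOf} (h : IsQuotient π σ) :
    ∃ (k : Fin σ.1 → ℕ) (α : ∀ i, Equiv.Perm (Fin (k i))),
      (∀ i, 0 < k i) ∧ IsInflation π.2 σ.2 k α := by
  obtain ⟨c, hc, hpos, hval⟩ := h
  let k i := Fintype.card {x // c x = i}
  let r i : Fin (k i) ≃o {x // c x = i} := Fintype.orderIsoFinOfCardEq _ rfl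
  choose α hα using fun i =>
    exists_perm_lt_iff_lt (π.2.injective.comp (Subtype.val_injective.comp (r i).injective))
  let e : (Σ i, Fin (k i)) ≃ Fin π.1 :=
    (Equiv.sigmaCongrRight fun i => (r i).toEquiv).trans (Equiv.sigmaFiberEquiv c)
  have hce (p : Σ i, Fin (k i)) : c (e p) = p.1 := (r p.1 p.2).2
  have hvalmono : Monotone fun v => σ.2 (c (π.2.symm v)) := fun v w hvw =>
    hval _ _ (by simpa using hvw)
  refine ⟨k, α, fun i => Fintype.card_pos_iff.mpr (nonempty_subtype.mpr (hc i)),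
    e, fun p q => ?_, fun p q => ?_⟩
  · rw [lt_iff_map_lt_or_map_eq_and_lt hpos, hce, hce]
    obtain ⟨i, a⟩ := p
    obtain ⟨j, b⟩ := q
    refine or_congr_right ⟨?_, ?_⟩
    · rintro ⟨rfl : i = j, hlt⟩
      exact ⟨rfl, (r i).lt_iff_lt.mp hlt⟩
    · rintro ⟨rfl : i = j, hlt⟩
      exact ⟨rfl, (r i).lt_iff_lt.mpr hlt⟩
  · rw [lt_iff_map_lt_or_map_eq_and_lt hvalmono]
    simp only [Equiv.symm_apply_apply, hce, σ.2.apply_eq_iff_eq]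
    obtain ⟨i, a⟩ := p
    obtain ⟨j, b⟩ := q
    refine or_congr_right ⟨?_, ?_⟩
    · rintro ⟨rfl : i = j, hlt⟩
      exact ⟨rfl, (hα i a b).mpr hlt⟩
    · rintro ⟨rfl : i = j, hlt⟩
      exact ⟨rfl, (hα i a b).mp hlt⟩

theorem IsInflation.embedsInNeighborhood {π σ : PermOf} {k : Fin σ.1 → ℕ}
    {α : ∀ i, Equiv.Perm (Fin (k i))} (h : IsInflation π.2 σ.2 k α) {i j : Fin σ.1}
    (hij : (inversionGraph σ.2).Adj j i) (hj : 0 < k j) :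
    EmbedsInNeighborhood ⟨k i, α i⟩ π := by
  obtain ⟨e, hpos, hval⟩ := h
  let f : inversionGraph (α i) ↪g inversionGraph π.2 :=
    inversionGraphEmbedding (fun a => e ⟨i, a⟩) (fun a b hab => by simpa [hpos] using hab)
      (fun a b => by simp [hval])
  refine embedsInNeighborhood_of_forall_adj f (y := e ⟨j, ⟨0, hj⟩⟩) fun a => ?_
  exact hij.imp (And.imp (fun h => (hpos _ _).mpr (Or.inl h)) fun h => (hval _ _).mpr (Or.inl h))
    (And.imp (fun h => (hpos _ _).mpr (Or.inl h)) fun h => (hval _ _).mpr (Or.inl h))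

/-! ### Substitution depth -/

theorem SubstDepthLE.succ {π : PermOf} {d : ℕ} (h : SubstDepthLE π d) :
    SubstDepthLE π (d + 1) := by
  induction h with
  | leaf π d hπ => exact .leaf π (d + 1) hπ
  | inflation π σ k α d hs hm hk hinf _ ih => exact .inflation π σ k α (d + 1) hs hm hk hinf ih
  | sum L d hL hind _ ih => exact .sum L (d + 1) hL hind ih
  | skew L d hL hind _ ih => exact .skew L (d + 1) hL hind ih

theorem substDepthLE_succ_of_isIndContained {π : PermOf} (hπ : 0 < π.1) {d : ℕ}
    (h : ∀ τ : PermOf, SumIndecomposable τ → inversionGraph τ.2 ⊴ inversionGraph π.2 →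
      SubstDepthLE τ d) : SubstDepthLE π (d + 1) := by
  by_cases hsum : SumDecomposable π
  · obtain ⟨L, hL, hLi, rfl⟩ := hsum.exists_psumList
    exact .sum L d hL hLi fun τ hτ => h τ (hLi τ hτ) (isIndContained_psumList hτ)
  · exact (h π ⟨hπ, hsum⟩ .rfl).succ

theorem SumIndecomposable.substDepthLE_succ_of_embedsInNeighborhood {π : PermOf}
    (hπ : SumIndecomposable π) (hlen : 1 < π.1) {d : ℕ}
    (h : ∀ τ : PermOf, 0 < τ.1 → EmbedsInNeighborhood τ π → SubstDepthLE τ d) :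
    SubstDepthLE π (d + 1) := by
  by_cases hskew : SkewDecomposable π
  · obtain ⟨L, hL, hLi, rfl⟩ := hskew.exists_pskewList
    have hpos (τ : PermOf) (hτ : τ ∈ L) : 0 < τ.1 := (hLi τ hτ).1
    exact .skew L d hL hLi fun τ hτ =>
      h τ (hpos τ hτ) (embedsInNeighborhood_pskewList hL hpos hτ)
  · obtain ⟨σ, hσ, hsimple, hquot⟩ := exists_isSimple_isQuotient hlen
    have hsum : ¬ SumDecomposable σ := mt hquot.sumDecomposable hπ.2
    obtain ⟨k, α, hk, hinf⟩ := hquot.exists_isInflation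
    refine .inflation π σ.2 k α d hsimple
      (not_isMonotonePerm hσ hsum (mt hquot.skewDecomposable hskew)) hk hinf fun i => ?_
    obtain ⟨j, hij⟩ : ∃ j, (inversionGraph σ.2).Adj i j := by
      by_contra! hi
      exact hsum (sumDecomposable_of_forall_not_adj hσ hi)
    exact h _ (hk i) (hinf.embedsInNeighborhood hij.symm (hk j))

theorem SumIndecomposable.length_eq_one_of_cliqueFree_two {π : PermOf}
    (hπ : SumIndecomposable π) (hfree : (inversionGraph π.2).CliqueFree 2) : π.1 = 1 := by
  by_contra hne
  have hlen : 1 < π.1 := lt_of_le_of_ne hπ.1 (Ne.symm hne)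
  refine hπ.2 (sumDecomposable_of_forall_not_adj hlen (i := ⟨0, hπ.1⟩) fun j => ?_)
  simp [SimpleGraph.cliqueFree_two.mp hfree]

theorem SumIndecomposable.substDepthLE_of_cliqueFree {π : PermOf} (hπ : SumIndecomposable π)
    {ℓ : ℕ} (hfree : (inversionGraph π.2).CliqueFree (ℓ + 2)) : SubstDepthLE π (2 * ℓ) := by
  induction ℓ generalizing π with
  | zero => exact .leaf π _ (hπ.length_eq_one_of_cliqueFree_two hfree)
  | succ ℓ ih =>
    by_cases hlen : π.1 = 1
    · exact .leaf π _ hlen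
    · refine hπ.substDepthLE_succ_of_embedsInNeighborhood (lt_of_le_of_ne hπ.1 (Ne.symm hlen))
        fun τ hτ hτπ => ?_
      exact substDepthLE_succ_of_isIndContained hτ fun ρ hρ hρτ =>
        ih hρ ((hτπ.cliqueFree hfree).comap hρτ.isContained)

/-- Every nonempty permutation avoiding the decreasing pattern `ℓ⋯21` (`ℓ ≥ 2`) has
substitution depth at most `2ℓ - 3`. -/
theorem substDepth_le_of_avoids_decreasing {ℓ : ℕ} (hℓ : 2 ≤ ℓ) (π : PermOf)
    (hπ : 0 < π.1) (hav : ¬ Contains (Fin.revPerm : Equiv.Perm (Fin ℓ)) π.2) :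
    SubstDepthLE π (2 * ℓ - 3) := by
  obtain ⟨k, rfl⟩ := Nat.exists_eq_add_of_le' hℓ
  have hfree := cliqueFree_inversionGraph_of_not_contains hav
  exact substDepthLE_succ_of_isIndContained hπ fun τ hτ hτπ =>
    hτ.substDepthLE_of_cliqueFree (hfree.comap hτπ.isContained)
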